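/- Let n ≥ 2, let α and β be permutations of {1,…,n} with Δ(α, β) = 0, and let σ be a permutation of {1,…,n} that is a single cycle of length n. Then there exists i ∈ {1, …, n−1} such that Δ(α, σ^i β) ≥ 2. -/

import Mathlib

/-!
Moving from `β x` to `α x` along the cycle `σ` takes at least one and at most `n - 1` steps, because
`α x ≠ β x`. With `n` points and only `n - 1` possible step counts, two points share theirs.
-/

/-- `σ` is a single cycle of length `n` on `Fin n`: the cyclic group generated by `σ`
acts transitively, i.e. every point is reachable from every point by iterating `σ`. -/
def IsSingleNCycle {n : ℕ} (σ : Equiv.Perm (Fin n)) : Prop :=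
  ∀ x y : Fin n, ∃ k : ℕ, (σ ^ k) x = y

/-- `Delta σ₁ σ₂` is the number of points `i` with `σ₁ i = σ₂ i`
(the number of fixed points of `σ₁⁻¹ σ₂`). -/
def Delta {n : ℕ} (σ₁ σ₂ : Equiv.Perm (Fin n)) : ℕ :=
  (Finset.univ.filter fun i => σ₁ i = σ₂ i).card

theorem IsSingleNCycle.isCycleOn_univ {n : ℕ} {σ : Equiv.Perm (Fin n)} (hσ : IsSingleNCycle σ) :
    σ.IsCycleOn (Finset.univ : Finset (Fin n)) := by
  rw [Finset.coe_univ]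
  refine ⟨Set.bijOn_univ.mpr σ.bijective, fun x _ y _ => ?_⟩
  obtain ⟨k, hk⟩ := hσ x y
  exact ⟨k, by rwa [zpow_natCast]⟩

theorem delta_eq_zero_iff {n : ℕ} {α β : Equiv.Perm (Fin n)} :
    Delta α β = 0 ↔ ∀ x, α x ≠ β x := by
  simp [Delta, Finset.filter_eq_empty_iff]

theorem exists_pow_eq_of_isCycleOn_of_ne {X : Type*} {σ : Equiv.Perm X} {s : Finset X}
    (hσ : σ.IsCycleOn s) {a b : X} (ha : a ∈ s) (hb : b ∈ s) (hab : a ≠ b) :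
    ∃ i ∈ Finset.Icc 1 (s.card - 1), (σ ^ i) a = b := by
  obtain ⟨i, hi, rfl⟩ := hσ.exists_pow_eq ha hb
  have hi₀ : i ≠ 0 := by
    rintro rfl
    exact hab rfl
  exact ⟨i, Finset.mem_Icc.mpr ⟨Nat.one_le_iff_ne_zero.mpr hi₀, Nat.le_sub_one_of_lt hi⟩, rfl⟩

theorem exists_pow_delta_ge_two_general {ι X : Type*} [DecidableEq X] {σ : Equiv.Perm X}
    {s : Finset X} (hσ : σ.IsCycleOn s) {t : Finset ι} {f g : ι → X} (hf : ∀ x ∈ t, f x ∈ s)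
    (hg : ∀ x ∈ t, g x ∈ s) (hfg : ∀ x ∈ t, f x ≠ g x) {m : ℕ} (hm : (s.card - 1) * m < t.card) :
    ∃ i, 1 ≤ i ∧ i ≤ s.card - 1 ∧ m < (t.filter fun x => f x = (σ ^ i) (g x)).card := by
  have hshift : ∀ x ∈ t, ∃ i ∈ Finset.Icc 1 (s.card - 1), (σ ^ i) (g x) = f x := fun x hx =>
    exists_pow_eq_of_isCycleOn_of_ne hσ (hg x hx) (hf x hx) (hfg x hx).symm
  choose! k hk hkx using hshift
  obtain ⟨i, hi, hfiber⟩ := Finset.exists_lt_card_fiber_of_mul_lt_card_of_maps_to hk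
    (by rwa [Nat.card_Icc, Nat.add_sub_cancel])
  have hsub : (t.filter fun x => k x = i) ⊆ t.filter fun x => f x = (σ ^ i) (g x) := by
    intro x hx
    obtain ⟨hxt, rfl⟩ := Finset.mem_filter.mp hx
    exact Finset.mem_filter.mpr ⟨hxt, (hkx x hxt).symm⟩
  obtain ⟨hi_pos, hi_le⟩ := Finset.mem_Icc.mp hi
  exact ⟨i, hi_pos, hi_le, hfiber.trans_le (Finset.card_le_card hsub)⟩

/-- For `n ≥ 2`, permutations `α, β` with `Δ(α, β) = 0` and a single `n`-cycle `σ`,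
there is `i ∈ {1, …, n-1}` with `Δ(α, σ^i β) ≥ 2`. -/
theorem exists_pow_delta_ge_two (n : ℕ) (hn : 2 ≤ n) (α β σ : Equiv.Perm (Fin n))
    (hΔ : Delta α β = 0) (hσ : IsSingleNCycle σ) :
    ∃ i : ℕ, 1 ≤ i ∧ i ≤ n - 1 ∧ 2 ≤ Delta α (σ ^ i * β) := by
  obtain ⟨i, hi_pos, hi_le, hcard⟩ := exists_pow_delta_ge_two_general (t := .univ) (m := 1)
    hσ.isCycleOn_univ (by simp) (by simp) (fun x _ => delta_eq_zero_iff.mp hΔ x) (by simp; omega)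
  exact ⟨i, hi_pos, by rwa [Finset.card_fin] at hi_le, hcard⟩
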